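/- arXiv:0706.0750 — 2 statements merged into one kernel-verified Lean document; each statement's English description precedes it below -/
import Mathlib

section
/- Fix an integer n ≥ 2 and positive real numbers p(k,j) > 0 for k ∈ {1,…,n} and integers j ≥ 1, and assume there is a constant C > 0 such that |log p(k,j)| ≤ C·j for all k and j. For q ≥ 1 set D_{q+1} = ∏_{j=1}^{q} s_j. Then for each k the series E_n(k) := Σ_{j=1}^∞ (log p(k,j))/n^j converges absolutely, and lim_{q→∞} (log D_{q+1})/(q·n^q) = ((n−1)/n) · Σ_{k=1}^n E_n(k). -/
open Filter

/-- The weight `t(w)` of a word `w` over the alphabet `Fin n`: if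
`w = i₁^{j₁} i₂^{j₂} ⋯ i_m^{j_m}` is the run decomposition of `w`, then
`t(w) = ∏_t p (i_t) (j_t)`. -/
noncomputable def runProd {n : ℕ} (p : Fin n → ℕ → ℝ) (w : List (Fin n)) : ℝ :=
  ((w.splitBy (· == ·)).map (fun r =>
    match r with
    | [] => 1
    | a :: t => p a (t.length + 1))).prod

/-- `sWord n p q = ∏_w t(w)`, the product over all `n^q` words `w` of length `q`. -/
noncomputable def sWord (n : ℕ) (p : Fin n → ℕ → ℝ) (q : ℕ) : ℝ :=
  ∏ f : Fin q → Fin n, runProd p (List.ofFn f)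

/-- The logarithmic weight of the word `i^(m+1) w`, read from left to right with the current
run consisting of `m + 1` copies of `i`; `ℓ k j` is the contribution of a run `k^(j+1)`. -/
def runLog {α : Type*} [DecidableEq α] (ℓ : α → ℕ → ℝ) : List α → α → ℕ → ℝ
  | [], a, m => ℓ a m
  | b :: w, a, m => if a = b then runLog ℓ w a (m + 1) else ℓ a m + runLog ℓ w b 0

theorem prod_map_splitBy_loop {n : ℕ} (p : Fin n → ℕ → ℝ) (hp : ∀ k, ∀ j, 1 ≤ j → 0 < p k j)
    (w : List (Fin n)) (a : Fin n) (m : ℕ) (gs : List (List (Fin n))) :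
    ((List.splitBy.loop (· == ·) w a (List.replicate m a) gs).map (fun r =>
      match r with
      | [] => 1
      | a :: t => p a (t.length + 1))).prod =
    (gs.map (fun r =>
      match r with
      | [] => 1
      | a :: t => p a (t.length + 1))).prod *
      Real.exp (runLog (fun k j => Real.log (p k (j + 1))) w a m) := by
  have hrun (a : Fin n) (m : ℕ) : (a :: List.replicate m a).reverse = a :: List.replicate m a := by
    rw [← List.replicate_succ, List.reverse_replicate]
  induction w generalizing a m gs with
  | nil =>
    simp only [List.splitBy.loop, hrun, runLog, Real.exp_log (hp a (m + 1) (by omega))]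
    simp [mul_comm]
  | cons b w ih =>
    by_cases h : a = b
    · subst h
      have := ih a (m + 1) gs
      simpa [List.splitBy.loop, runLog, List.replicate_succ] using this
    · have := ih b 0 ((a :: List.replicate m a) :: gs)
      have hab : (a == b) = false := by simpa using h
      simp only [List.replicate_zero] at this
      simp only [List.splitBy.loop, hab, hrun, this, runLog, h, if_false, Real.exp_add,
        Real.exp_log (hp a (m + 1) (by omega))]
      simp
      ring

theorem runProd_cons {n : ℕ} (p : Fin n → ℕ → ℝ) (hp : ∀ k, ∀ j, 1 ≤ j → 0 < p k j)
    (a : Fin n) (w : List (Fin n)) :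
    runProd p (a :: w) = Real.exp (runLog (fun k j => Real.log (p k (j + 1))) w a 0) := by
  have := prod_map_splitBy_loop p hp w a 0 []
  simpa [runProd, List.splitBy] using this

/-- The sum of `runLog` over all continuations of length `q`. -/
noncomputable def runLogSum {n : ℕ} (ℓ : Fin n → ℕ → ℝ) (q : ℕ) (a : Fin n) (m : ℕ) : ℝ :=
  ∑ f : Fin q → Fin n, runLog ℓ (List.ofFn f) a m

theorem sum_fin_succ_fun {n q : ℕ} (F : List (Fin n) → ℝ) :
    ∑ f : Fin (q + 1) → Fin n, F (List.ofFn f) =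
      ∑ b, ∑ f : Fin q → Fin n, F (b :: List.ofFn f) := by
  rw [← (Fin.consEquiv (fun _ : Fin (q + 1) => Fin n)).sum_comp, Fintype.sum_prod_type]
  simp [Fin.consEquiv, List.ofFn_succ]

theorem sWord_succ {n : ℕ} (p : Fin n → ℕ → ℝ) (hp : ∀ k, ∀ j, 1 ≤ j → 0 < p k j) (q : ℕ) :
    sWord n p (q + 1) =
      Real.exp (∑ a, runLogSum (fun k j => Real.log (p k (j + 1))) q a 0) := by
  have hpos (f : Fin (q + 1) → Fin n) : 0 < runProd p (List.ofFn f) := by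
    rw [List.ofFn_succ, runProd_cons p hp]
    exact Real.exp_pos _
  rw [sWord, ← Real.exp_log (Finset.prod_pos fun f _ => hpos f),
    Real.log_prod fun f _ => (hpos f).ne', sum_fin_succ_fun fun w => Real.log (runProd p w)]
  simp only [runProd_cons p hp, Real.log_exp, runLogSum]

theorem runLogSum_zero {n : ℕ} (ℓ : Fin n → ℕ → ℝ) (a : Fin n) (m : ℕ) :
    runLogSum ℓ 0 a m = ℓ a m := by
  simp [runLogSum, runLog]

theorem runLogSum_succ {n : ℕ} (ℓ : Fin n → ℕ → ℝ) (q : ℕ) (a : Fin n) (m : ℕ) :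
    runLogSum ℓ (q + 1) a m = runLogSum ℓ q a (m + 1) - runLogSum ℓ q a 0 +
      ∑ b, runLogSum ℓ q b 0 + (n - 1) * n ^ q * ℓ a m := by
  have h (b : Fin n) : ∑ f : Fin q → Fin n, runLog ℓ (b :: List.ofFn f) a m =
      (runLogSum ℓ q b 0 + n ^ q * ℓ a m) +
        if a = b then runLogSum ℓ q a (m + 1) - runLogSum ℓ q a 0 - n ^ q * ℓ a m else 0 := by
    by_cases hab : a = b
    · subst hab
      simp [runLog, runLogSum]
    · simp [runLog, runLogSum, hab, Finset.sum_add_distrib, add_comm]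
  rw [runLogSum, sum_fin_succ_fun fun w => runLog ℓ w a m]
  simp only [h, Finset.sum_add_distrib, Finset.sum_ite_eq, Finset.mem_univ, if_true,
    Finset.sum_const, Finset.card_univ, Fintype.card_fin, nsmul_eq_mul]
  ring

theorem runLogSum_sub {n : ℕ} (ℓ : Fin n → ℕ → ℝ) (q : ℕ) (a : Fin n) (m : ℕ) :
    runLogSum ℓ q a (m + 1) - runLogSum ℓ q a m =
      (ℓ a (m + q + 1) - ℓ a (m + q)) + ∑ j ∈ Finset.range q,
        ((n : ℝ) - 1) * n ^ (q - 1 - j) * (ℓ a (m + j + 1) - ℓ a (m + j)) := by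
  induction q generalizing m with
  | zero => simp [runLogSum_zero]
  | succ q ih =>
    rw [Finset.sum_range_succ', runLogSum_succ, runLogSum_succ]
    have e := ih (m + 1)
    have hs : ∑ j ∈ Finset.range q, ((n : ℝ) - 1) * n ^ (q + 1 - 1 - (j + 1)) *
        (ℓ a (m + (j + 1) + 1) - ℓ a (m + (j + 1))) =
        ∑ j ∈ Finset.range q, ((n : ℝ) - 1) * n ^ (q - 1 - j) *
        (ℓ a (m + 1 + j + 1) - ℓ a (m + 1 + j)) := by
      refine Finset.sum_congr rfl fun j _ => ?_
      rw [show q + 1 - 1 - (j + 1) = q - 1 - j by omega, show m + (j + 1) = m + 1 + j by omega]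
    rw [hs, show m + (q + 1) = m + 1 + q by omega]
    simp only [add_zero, Nat.sub_zero, Nat.add_sub_cancel]
    linarith

/-- A sequence obeying a contracting affine recursion with convergent forcing converges. -/
theorem tendsto_of_affine_recursion {r c : ℝ} (hr0 : 0 ≤ r) (hr1 : r < 1) {d b : ℕ → ℝ}
    (hd : ∀ q, d (q + 1) = r * d q + b q) (hb : Tendsto b atTop (nhds c)) :
    Tendsto d atTop (nhds (c / (1 - r))) := by
  have h1 : 0 < 1 - r := by linarith
  rw [Metric.tendsto_atTop]
  intro ε hε
  obtain ⟨N, hN⟩ := Metric.tendsto_atTop.1 hb (ε / 2 * (1 - r)) (by positivity)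
  have hc : c = (1 - r) * (c / (1 - r)) := by field_simp
  set l := c / (1 - r)
  have key (i : ℕ) : |d (N + i) - l| ≤ ε / 2 + r ^ i * |d N - l| := by
    induction i with
    | zero => simp; positivity
    | succ i ih =>
      have hbi := (hN (N + i) (by omega)).le
      rw [Real.dist_eq] at hbi
      have e : d (N + (i + 1)) - l = r * (d (N + i) - l) + (b (N + i) - c) := by
        rw [← add_assoc, hd]; linear_combination hc
      rw [e]
      refine (abs_add_le _ _).trans ?_
      rw [abs_mul, abs_of_nonneg hr0, pow_succ]
      nlinarith [mul_le_mul_of_nonneg_left ih hr0]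
  have hlim : Tendsto (fun i : ℕ => r ^ i * |d N - l|) atTop (nhds 0) := by
    simpa using (tendsto_pow_atTop_nhds_zero_of_lt_one hr0 hr1).mul_const |d N - l|
  obtain ⟨M, hM⟩ := eventually_atTop.1 (hlim.eventually_lt_const (half_pos hε))
  refine ⟨N + M, fun q hq => ?_⟩
  obtain ⟨i, rfl⟩ := Nat.exists_eq_add_of_le (show N ≤ q by omega)
  rw [Real.dist_eq]
  linarith [key i, hM i (by omega)]

/-- The growth of the partial sums of `T`, from the defect of `T` from geometric growth. -/
theorem tendsto_sum_div_mul_pow {x c : ℝ} (hx : 1 < x) {T : ℕ → ℝ}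
    (hT : Tendsto (fun q => (T (q + 1) - x * T q) / x ^ q) atTop (nhds c)) :
    Tendsto (fun q : ℕ => (∑ i ∈ Finset.range q, T i) / (q * x ^ q)) atTop
      (nhds (c / (x * (x - 1)))) := by
  have hx0 : x ≠ 0 := by positivity
  have hx1 : x - 1 ≠ 0 := by linarith
  set y : ℕ → ℝ := fun q => (∑ i ∈ Finset.range q, T i) / x ^ q with hy
  have hd : Tendsto (fun q => y (q + 1) - y q) atTop (nhds (c / x ^ 2 / (1 - x⁻¹))) := by
    refine tendsto_of_affine_recursion (b := fun q => (T (q + 1) - x * T q) / x ^ q / x ^ 2)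
      (by positivity) (inv_lt_one_of_one_lt₀ hx) (fun q => ?_) (hT.div_const _)
    simp only [hy, Finset.sum_range_succ]
    field_simp
    ring
  have hces := hd.cesaro
  have hlim : c / x ^ 2 / (1 - x⁻¹) = c / (x * (x - 1)) := by
    field_simp
  rw [hlim] at hces
  refine hces.congr fun q => ?_
  rw [Finset.sum_range_sub]
  simp only [hy, Finset.range_zero, Finset.sum_empty, div_eq_mul_inv, mul_inv]
  ring

theorem tendsto_runLogSum_sub {n : ℕ} (hn : n ≠ 0) (ℓ : Fin n → ℕ → ℝ) (a : Fin n)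
    (hs : Summable fun j : ℕ => ℓ a j / (n : ℝ) ^ (j + 1)) :
    Tendsto (fun q => (runLogSum ℓ q a 1 - runLogSum ℓ q a 0) / (n : ℝ) ^ q) atTop
      (nhds ((n - 1) * ((n - 1) * (∑' j : ℕ, ℓ a j / (n : ℝ) ^ (j + 1)) - ℓ a 0))) := by
  have hn0 : (n : ℝ) ≠ 0 := by exact_mod_cast hn
  have h0 := hs.hasSum
  set E := ∑' j : ℕ, ℓ a j / (n : ℝ) ^ (j + 1)
  have h1 : HasSum (fun j : ℕ => ℓ a (j + 1) / (n : ℝ) ^ (j + 2)) (E - ℓ a 0 / n) := by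
    rw [← hasSum_nat_add_iff' 1] at h0
    simpa using h0
  have hδ : HasSum (fun j : ℕ => (ℓ a (j + 1) - ℓ a j) / (n : ℝ) ^ (j + 1))
      (n * (E - ℓ a 0 / n) - E) := by
    refine ((h1.mul_left (n : ℝ)).sub h0).congr_fun ?_
    intro j
    field_simp
    ring
  have hlim := (hδ.summable.tendsto_atTop_zero.const_mul (n : ℝ)).add
    (hδ.tendsto_sum_nat.const_mul ((n : ℝ) - 1))
  have e : (n : ℝ) * 0 + (n - 1) * (n * (E - ℓ a 0 / n) - E) = (n - 1) * ((n - 1) * E - ℓ a 0) := by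
    field_simp
    ring
  rw [e] at hlim
  refine hlim.congr fun q => ?_
  rw [runLogSum_sub ℓ q a 0, add_div, Finset.sum_div, Finset.mul_sum]
  congr 1
  · simp only [zero_add]
    field_simp
    ring
  · refine Finset.sum_congr rfl fun j hj => ?_
    have hq : q = (q - 1 - j) + (j + 1) := by have := Finset.mem_range.1 hj; omega
    have hpow : (n : ℝ) ^ q = n ^ (q - 1 - j) * n ^ (j + 1) := by rw [← pow_add, ← hq]
    rw [hpow]
    simp only [zero_add]
    field_simp

theorem summable_abs_div_pow_of_le_mul {x C : ℝ} (hx : 1 < x) {u : ℕ → ℝ}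
    (hu : ∀ j, 1 ≤ j → |u j| ≤ C * j) :
    Summable fun j : ℕ => |u (j + 1)| / x ^ (j + 1) := by
  have hx0 : 0 < x := by linarith
  have hr : ‖x⁻¹‖ < 1 := by
    rw [Real.norm_of_nonneg (by positivity)]
    exact inv_lt_one_of_one_lt₀ hx
  have hg := (summable_pow_mul_geometric_of_norm_lt_one 1 hr).mul_left C
  refine Summable.of_nonneg_of_le (fun j => by positivity) (fun j => ?_)
    ((summable_nat_add_iff 1).2 hg)
  rw [div_eq_mul_inv, pow_one, ← mul_assoc, inv_pow]
  exact mul_le_mul_of_nonneg_right (hu (j + 1) (by omega)) (by positivity)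

/-- If `|log p(k,j)| ≤ C·j` for all `k, j ≥ 1`, then for each `k`
the series `E_n(k) = Σ_{j=1}^∞ (log p(k,j))/n^j` converges absolutely and, with
`D_{q+1} = ∏_{j=1}^q s_j`,
`lim_{q→∞} (log D_{q+1})/(q·n^q) = ((n-1)/n)·Σ_{k=1}^n E_n(k)`. -/
theorem stmt_8 (n : ℕ) (hn : 2 ≤ n) (p : Fin n → ℕ → ℝ)
    (hp : ∀ k, ∀ j, 1 ≤ j → 0 < p k j)
    (C : ℝ) (hC : 0 < C)
    (hbound : ∀ k, ∀ j, 1 ≤ j → |Real.log (p k j)| ≤ C * j)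
    (D : ℕ → ℝ)
    (hD : ∀ q, 1 ≤ q → D (q + 1) = ∏ j ∈ Finset.Icc 1 q, sWord n p j) :
    (∀ k, Summable (fun j : ℕ => |Real.log (p k (j + 1))| / (n : ℝ) ^ (j + 1))) ∧
    Tendsto (fun q : ℕ => Real.log (D (q + 1)) / (q * (n : ℝ) ^ q)) atTop
      (nhds (((n : ℝ) - 1) / n *
        ∑ k, ∑' j : ℕ, Real.log (p k (j + 1)) / (n : ℝ) ^ (j + 1))) := by
  have hn1 : (1 : ℝ) < n := by exact_mod_cast hn
  have hn0 : (n : ℝ) ≠ 0 := by positivity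
  have hsum (k) : Summable fun j : ℕ => |Real.log (p k (j + 1))| / (n : ℝ) ^ (j + 1) :=
    summable_abs_div_pow_of_le_mul hn1 (u := fun j => Real.log (p k j)) (hbound k)
  refine ⟨hsum, ?_⟩
  set ℓ : Fin n → ℕ → ℝ := fun k j => Real.log (p k (j + 1)) with hℓ
  have hsum' (k) : Summable fun j : ℕ => ℓ k j / (n : ℝ) ^ (j + 1) := by
    refine Summable.of_abs ((hsum k).congr fun j => ?_)
    rw [abs_div, abs_of_pos (by positivity : (0 : ℝ) < (n : ℝ) ^ (j + 1))]
  set T : ℕ → ℝ := fun q => ∑ a, runLogSum ℓ q a 0 with hT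
  have hlogD (q : ℕ) (hq : 1 ≤ q) : Real.log (D (q + 1)) = ∑ i ∈ Finset.range q, T i := by
    rw [hD q hq, ← Finset.Ico_add_one_right_eq_Icc, Finset.prod_Ico_eq_prod_range]
    simp only [Nat.add_sub_cancel, add_comm 1, sWord_succ p hp]
    rw [← Real.exp_sum, Real.log_exp]
  have hrec : Tendsto (fun q => (T (q + 1) - n * T q) / (n : ℝ) ^ q) atTop
      (nhds ((n - 1) ^ 2 * ∑ k, ∑' j : ℕ, ℓ k j / (n : ℝ) ^ (j + 1))) := by
    have hlim := (tendsto_finsetSum Finset.univ fun a _ =>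
      tendsto_runLogSum_sub (by omega) ℓ a (hsum' a)).add_const (((n : ℝ) - 1) * ∑ a, ℓ a 0)
    have e : (∑ a, ((n : ℝ) - 1) * ((n - 1) * (∑' j : ℕ, ℓ a j / (n : ℝ) ^ (j + 1)) - ℓ a 0)) +
        (n - 1) * ∑ a, ℓ a 0 = (n - 1) ^ 2 * ∑ k, ∑' j : ℕ, ℓ k j / (n : ℝ) ^ (j + 1) := by
      rw [← Finset.mul_sum, Finset.sum_sub_distrib, ← Finset.mul_sum]
      ring
    rw [e] at hlim
    refine hlim.congr fun q => ?_
    simp only [hT, runLogSum_succ, Finset.sum_add_distrib, ← Finset.sum_div, ← Finset.mul_sum,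
      Finset.sum_const, Finset.card_univ, Fintype.card_fin, nsmul_eq_mul, zero_add]
    field_simp
    ring
  have hmain := tendsto_sum_div_mul_pow hn1 hrec
  have hn2 : (n : ℝ) - 1 ≠ 0 := by linarith
  have e : ((n : ℝ) - 1) ^ 2 * (∑ k, ∑' j : ℕ, ℓ k j / (n : ℝ) ^ (j + 1)) / (n * (n - 1)) =
      (n - 1) / n * ∑ k, ∑' j : ℕ, ℓ k j / (n : ℝ) ^ (j + 1) := by
    field_simp
  rw [e] at hmain
  refine hmain.congr' ?_
  filter_upwards [eventually_ge_atTop 1] with q hq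
  rw [hlogD q hq]
end

section
/- Fix an integer n ≥ 2 and positive real numbers a(k,j) > 0 for k ∈ {1,…,n}, j ≥ 1, and assume there is a constant C > 0 with |log a(k,j)| ≤ C for all k, j. Define p(k,j) = ( a(k,1)·a(k,2)⋯a(k,j) )², and set D_{q+1} = ∏_{j=1}^{q} s_j for q ≥ 1. Then lim_{q→∞} (log D_{q+1})/(q·n^q) = 2 · Σ_{k=1}^n Σ_{j=1}^∞ (log a(k,j)) / n^j, the inner series converging absolutely. -/
open Filter

/-- The number of leading letters of `w` equal to `i`. -/
def leadingRun {n : ℕ} (i : Fin n) : List (Fin n) → ℕ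
  | [] => 0
  | b :: t => if b = i then leadingRun i t + 1 else 0

/-- The weight of a single run. -/
noncomputable def runWeight {n : ℕ} (p : Fin n → ℕ → ℝ) : List (Fin n) → ℝ
  | [] => 1
  | a :: t => p a (t.length + 1)

/-- The weight of the word `i ^ (c + 1) ++ w`, computed by the loop behind `List.splitBy` after it
has read the first `c + 1` letters. -/
noncomputable def runProdLoop {n : ℕ} (p : Fin n → ℕ → ℝ) (w : List (Fin n)) (i : Fin n)
    (c : ℕ) : ℝ :=
  ((List.splitBy.loop (· == ·) w i (List.replicate c i) []).map (runWeight p)).prod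

lemma splitBy_loop_eq_append {α : Type*} (r : α → α → Bool) (l : List α) (a : α) (g : List α)
    (gs : List (List α)) :
    List.splitBy.loop r l a g gs = gs.reverse ++ List.splitBy.loop r l a g [] := by
  induction l generalizing a g gs with
  | nil => simp [List.splitBy.loop]
  | cons b l ih =>
    simp_rw [List.splitBy.loop]
    split <;> rw [ih]
    conv_rhs => rw [ih]
    simp

lemma runWeight_replicate {n : ℕ} (p : Fin n → ℕ → ℝ) (i : Fin n) (c : ℕ) :
    runWeight p (i :: List.replicate c i).reverse = p i (c + 1) := by
  rw [← List.replicate_succ, List.reverse_replicate, List.replicate_succ]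
  simp [runWeight]

lemma runProdLoop_nil {n : ℕ} (p : Fin n → ℕ → ℝ) (i : Fin n) (c : ℕ) :
    runProdLoop p [] i c = p i (c + 1) := by
  rw [runProdLoop, List.splitBy.loop, List.reverse_singleton, List.map_singleton,
    runWeight_replicate, List.prod_singleton]

lemma runProdLoop_cons_self {n : ℕ} (p : Fin n → ℕ → ℝ) (t : List (Fin n)) (i : Fin n) (c : ℕ) :
    runProdLoop p (i :: t) i c = runProdLoop p t i (c + 1) := by
  simp [runProdLoop, List.splitBy.loop, List.replicate_succ]

lemma runProdLoop_cons_of_ne {n : ℕ} (p : Fin n → ℕ → ℝ) (t : List (Fin n)) {i b : Fin n}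
    (h : b ≠ i) (c : ℕ) :
    runProdLoop p (b :: t) i c = p i (c + 1) * runProdLoop p t b 0 := by
  have hib : (i == b) = false := by simpa using h.symm
  simp only [runProdLoop, List.splitBy.loop, hib]
  rw [splitBy_loop_eq_append, List.reverse_singleton, List.map_append, List.map_singleton,
    runWeight_replicate, List.prod_append, List.prod_singleton, List.replicate_zero]

lemma runProd_cons_s14 {n : ℕ} (p : Fin n → ℕ → ℝ) (i : Fin n) (w : List (Fin n)) :
    runProd p (i :: w) = runProdLoop p w i 0 := by
  unfold runProd runProdLoop
  congr 2

lemma weight_succ {n : ℕ} {a p : Fin n → ℕ → ℝ}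
    (hp : ∀ k j, p k j = (∏ i ∈ Finset.Icc 1 j, a k i) ^ 2) (k : Fin n) (j : ℕ) :
    p k (j + 1) = p k j * a k (j + 1) ^ 2 := by
  rw [hp, hp, Finset.prod_Icc_succ_top (by omega), mul_pow]

lemma runProdLoop_succ {n : ℕ} {a p : Fin n → ℕ → ℝ}
    (hp : ∀ k j, p k j = (∏ i ∈ Finset.Icc 1 j, a k i) ^ 2) (w : List (Fin n)) (i : Fin n)
    (c : ℕ) :
    runProdLoop p w i (c + 1) = runProdLoop p w i c * a i (c + leadingRun i w + 2) ^ 2 := by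
  induction w generalizing c with
  | nil => simp only [runProdLoop_nil, leadingRun, weight_succ hp i (c + 1)]
  | cons b t ih =>
    by_cases h : b = i
    · subst h
      rw [runProdLoop_cons_self, runProdLoop_cons_self, ih (c + 1), leadingRun, if_pos rfl]
      congr 3
      omega
    · rw [runProdLoop_cons_of_ne p t h, runProdLoop_cons_of_ne p t h, weight_succ hp i (c + 1),
        leadingRun, if_neg h]
      ring_nf

/-- Prepending a letter to a word multiplies its weight by a single squared coefficient. -/
lemma runProd_cons_eq_mul {n : ℕ} {a p : Fin n → ℕ → ℝ}
    (hp : ∀ k j, p k j = (∏ i ∈ Finset.Icc 1 j, a k i) ^ 2) (i : Fin n) (w : List (Fin n)) :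
    runProd p (i :: w) = runProd p w * a i (leadingRun i w + 1) ^ 2 := by
  cases w with
  | nil => rw [runProd_cons_s14, runProdLoop_nil, hp]; simp [leadingRun, runProd]
  | cons b t =>
    rw [runProd_cons_s14, runProd_cons_s14]
    by_cases h : b = i
    · subst h
      rw [runProdLoop_cons_self, runProdLoop_succ hp, leadingRun, if_pos rfl]
      congr 3
      omega
    · rw [runProdLoop_cons_of_ne p t h, leadingRun, if_neg h, hp]
      simp [mul_comm]

lemma runProd_pos {n : ℕ} {a p : Fin n → ℕ → ℝ} (ha : ∀ k, ∀ j, 1 ≤ j → 0 < a k j)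
    (hp : ∀ k j, p k j = (∏ i ∈ Finset.Icc 1 j, a k i) ^ 2) (w : List (Fin n)) :
    0 < runProd p w := by
  induction w with
  | nil => simp [runProd]
  | cons i w ih =>
    rw [runProd_cons_eq_mul hp]
    exact mul_pos ih (pow_pos (ha _ _ (by omega)) 2)

lemma log_runProd_cons {n : ℕ} {a p : Fin n → ℕ → ℝ} (ha : ∀ k, ∀ j, 1 ≤ j → 0 < a k j)
    (hp : ∀ k j, p k j = (∏ i ∈ Finset.Icc 1 j, a k i) ^ 2) (i : Fin n) (w : List (Fin n)) :
    Real.log (runProd p (i :: w)) =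
      Real.log (runProd p w) + 2 * Real.log (a i (leadingRun i w + 1)) := by
  rw [runProd_cons_eq_mul hp, Real.log_mul (runProd_pos ha hp w).ne'
    (pow_pos (ha _ _ (by omega)) 2).ne', Real.log_pow]
  norm_num

lemma sum_words_succ {n : ℕ} (q : ℕ) (F : List (Fin n) → ℝ) :
    ∑ f : Fin (q + 1) → Fin n, F (List.ofFn f) =
      ∑ i, ∑ f : Fin q → Fin n, F (i :: List.ofFn f) := by
  rw [← (Fin.consEquiv fun _ => Fin n).sum_comp, Fintype.sum_prod_type]
  simp [Fin.consEquiv, List.ofFn_succ]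

lemma sum_leadingRun_succ {n : ℕ} (i : Fin n) (l : ℕ → ℝ) (q : ℕ) :
    ∑ f : Fin (q + 1) → Fin n, l (leadingRun i (List.ofFn f)) =
      ∑ f : Fin q → Fin n, l (leadingRun i (List.ofFn f) + 1) +
        ((n : ℝ) - 1) * (n : ℝ) ^ q * l 0 := by
  rw [sum_words_succ q fun w => l (leadingRun i w), ← Finset.add_sum_erase _ _ (Finset.mem_univ i)]
  congr 1
  · simp [leadingRun]
  · have hn : 1 ≤ n := i.pos
    rw [Finset.sum_congr rfl (g := fun _ => (n : ℝ) ^ q * l 0) fun b hb => by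
      simp [leadingRun, Finset.ne_of_mem_erase hb]]
    simp [Finset.card_erase_of_mem, Nat.cast_sub hn, mul_assoc]

lemma sum_range_sum_leadingRun {n : ℕ} (i : Fin n) (l : ℕ → ℝ) (q : ℕ) :
    ∑ m ∈ Finset.range (q + 1), ∑ f : Fin m → Fin n, l (leadingRun i (List.ofFn f)) =
      ∑ j ∈ Finset.range (q + 1), (n : ℝ) ^ (q - j) * l j := by
  induction q generalizing l with
  | zero => simp [leadingRun]
  | succ q ih =>
    rw [Finset.sum_range_succ', Finset.sum_congr rfl fun m _ => sum_leadingRun_succ i l m,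
      Finset.sum_add_distrib, ih fun j => l (j + 1), ← Finset.sum_mul, ← Finset.mul_sum,
      mul_geom_sum, Finset.sum_range_succ' _ (q + 1)]
    simp [leadingRun]
    ring

lemma sWord_pos {n : ℕ} {a p : Fin n → ℕ → ℝ} (ha : ∀ k, ∀ j, 1 ≤ j → 0 < a k j)
    (hp : ∀ k j, p k j = (∏ i ∈ Finset.Icc 1 j, a k i) ^ 2) (q : ℕ) : 0 < sWord n p q :=
  Finset.prod_pos fun _ _ => runProd_pos ha hp _

lemma log_sWord {n : ℕ} {a p : Fin n → ℕ → ℝ} (ha : ∀ k, ∀ j, 1 ≤ j → 0 < a k j)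
    (hp : ∀ k j, p k j = (∏ i ∈ Finset.Icc 1 j, a k i) ^ 2) (q : ℕ) :
    Real.log (sWord n p q) = ∑ f : Fin q → Fin n, Real.log (runProd p (List.ofFn f)) :=
  Real.log_prod fun _ _ => (runProd_pos ha hp _).ne'

lemma log_sWord_succ {n : ℕ} {a p : Fin n → ℕ → ℝ} (ha : ∀ k, ∀ j, 1 ≤ j → 0 < a k j)
    (hp : ∀ k j, p k j = (∏ i ∈ Finset.Icc 1 j, a k i) ^ 2) (q : ℕ) :
    Real.log (sWord n p (q + 1)) = n * Real.log (sWord n p q) +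
      2 * ∑ i, ∑ f : Fin q → Fin n, Real.log (a i (leadingRun i (List.ofFn f) + 1)) := by
  rw [log_sWord ha hp, log_sWord ha hp, sum_words_succ q fun w => Real.log (runProd p w)]
  simp [log_runProd_cons ha hp, Finset.sum_add_distrib, Finset.mul_sum]

lemma sum_log_sWord_succ {n : ℕ} {a p : Fin n → ℕ → ℝ} (ha : ∀ k, ∀ j, 1 ≤ j → 0 < a k j)
    (hp : ∀ k j, p k j = (∏ i ∈ Finset.Icc 1 j, a k i) ^ 2) (q : ℕ) :
    ∑ m ∈ Finset.range (q + 2), Real.log (sWord n p m) =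
      n * ∑ m ∈ Finset.range (q + 1), Real.log (sWord n p m) +
        2 * ∑ i, ∑ j ∈ Finset.range (q + 1), (n : ℝ) ^ (q - j) * Real.log (a i (j + 1)) := by
  rw [Finset.sum_range_succ', Finset.sum_congr rfl fun m _ => log_sWord_succ ha hp m,
    Finset.sum_add_distrib, ← Finset.mul_sum, ← Finset.mul_sum, Finset.sum_comm]
  rw [Finset.sum_congr rfl fun i _ =>
    sum_range_sum_leadingRun i (fun j => Real.log (a i (j + 1))) q]
  simp [sWord, runProd]

/-- The normalized logarithm of `∏ s_j` is a sum of partial sums of the limiting series. -/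
lemma sum_log_sWord_div_pow {n : ℕ} (hn : n ≠ 0) {a p : Fin n → ℕ → ℝ}
    (ha : ∀ k, ∀ j, 1 ≤ j → 0 < a k j)
    (hp : ∀ k j, p k j = (∏ i ∈ Finset.Icc 1 j, a k i) ^ 2) (q : ℕ) :
    (∑ m ∈ Finset.range (q + 1), Real.log (sWord n p m)) / (n : ℝ) ^ q =
      ∑ m ∈ Finset.range q,
        2 * ∑ i, ∑ j ∈ Finset.range (m + 1), Real.log (a i (j + 1)) / (n : ℝ) ^ (j + 1) := by
  have hn' : (n : ℝ) ≠ 0 := Nat.cast_ne_zero.2 hn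
  induction q with
  | zero => simp [sWord, runProd]
  | succ q ih =>
    conv_rhs => rw [Finset.sum_range_succ, ← ih]
    rw [sum_log_sWord_succ ha hp, add_div]
    congr 1
    · rw [pow_succ', mul_div_mul_left _ _ hn']
    · rw [mul_div_assoc, Finset.sum_div]
      simp_rw [Finset.sum_div]
      congr 1
      refine Finset.sum_congr rfl fun i _ => Finset.sum_congr rfl fun j hj => ?_
      rw [show q + 1 = (q - j) + (j + 1) by grind, pow_add]
      field_simp

/-- For positive reals `a(k,j)` with `|log a(k,j)| ≤ C`, set
`p(k,j) = (a(k,1)⋯a(k,j))²` and `D_{q+1} = ∏_{j=1}^q s_j`. Then each series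
`Σ_{j=1}^∞ (log a(k,j))/n^j` converges absolutely and
`lim_{q→∞} (log D_{q+1})/(q·n^q) = 2·Σ_{k=1}^n Σ_{j=1}^∞ (log a(k,j))/n^j`. -/
theorem stmt_14 (n : ℕ) (hn : 2 ≤ n) (a : Fin n → ℕ → ℝ)
    (ha : ∀ k, ∀ j, 1 ≤ j → 0 < a k j)
    (C : ℝ) (hC : 0 < C)
    (hbound : ∀ k, ∀ j, 1 ≤ j → |Real.log (a k j)| ≤ C)
    (p : Fin n → ℕ → ℝ)
    (hp : ∀ k j, p k j = (∏ i ∈ Finset.Icc 1 j, a k i) ^ 2)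
    (D : ℕ → ℝ)
    (hD : ∀ q, 1 ≤ q → D (q + 1) = ∏ j ∈ Finset.Icc 1 q, sWord n p j) :
    (∀ k, Summable (fun j : ℕ => |Real.log (a k (j + 1))| / (n : ℝ) ^ (j + 1))) ∧
    Tendsto (fun q : ℕ => Real.log (D (q + 1)) / (q * (n : ℝ) ^ q)) atTop
      (nhds (2 * ∑ k, ∑' j : ℕ, Real.log (a k (j + 1)) / (n : ℝ) ^ (j + 1))) := by
  have hn1 : (1 : ℝ) < n := by exact_mod_cast hn
  have hsum : ∀ k, Summable fun j : ℕ => |Real.log (a k (j + 1))| / (n : ℝ) ^ (j + 1) := by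
    intro k
    have hgeom : Summable fun j : ℕ => C * (1 / (n : ℝ)) ^ (j + 1) :=
      ((summable_nat_add_iff 1).2 (summable_geometric_of_lt_one (by positivity)
        ((div_lt_one (by positivity)).2 hn1))).mul_left C
    refine hgeom.of_nonneg_of_le (fun j => by positivity) fun j => ?_
    rw [one_div, inv_pow, ← div_eq_mul_inv]
    gcongr
    exact hbound k _ (by omega)
  refine ⟨hsum, ?_⟩
  have hpartial : Tendsto (fun m : ℕ => 2 * ∑ i, ∑ j ∈ Finset.range (m + 1),
      Real.log (a i (j + 1)) / (n : ℝ) ^ (j + 1)) atTop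
      (nhds (2 * ∑ k, ∑' j : ℕ, Real.log (a k (j + 1)) / (n : ℝ) ^ (j + 1))) := by
    refine (tendsto_finsetSum _ fun k _ => ?_).const_mul 2
    have hk : Summable fun j : ℕ => Real.log (a k (j + 1)) / (n : ℝ) ^ (j + 1) := by
      refine Summable.of_abs ((hsum k).congr fun j => ?_)
      rw [abs_div, abs_of_pos (by positivity : (0 : ℝ) < (n : ℝ) ^ (j + 1))]
    exact hk.hasSum.tendsto_sum_nat.comp (tendsto_add_atTop_nat 1)
  refine hpartial.cesaro.congr' ?_
  filter_upwards [eventually_ge_atTop 1] with q hq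
  have hlog : Real.log (D (q + 1)) = ∑ m ∈ Finset.range (q + 1), Real.log (sWord n p m) := by
    rw [hD q hq, Real.log_prod fun m _ => (sWord_pos ha hp m).ne',
      Finset.range_eq_Ico, Finset.sum_eq_sum_Ico_succ_bot (by omega)]
    simp [sWord, runProd, Finset.Ico_add_one_right_eq_Icc]
  rw [← sum_log_sWord_div_pow (by omega) ha hp, hlog]
  field_simp
end
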